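/- Let G be a group acting k-acylindrically and without edge inversions on a simplicial tree T, where k is a nonnegative integer. Let g ∈ G be elliptic, let h ∈ G be hyperbolic, let ℓ be a nonzero integer with g^ℓ ≠ 1, and let p be an integer with p ≥ k+1. Then Fix(g^ℓ) ∩ Fix(h^p·g^ℓ·h^{−p}) = ∅. -/

import Mathlib

/-!
A vertex `v` on the axis of `h` is moved by the least possible distance `τ(h)`. If the geodesics
from `v` to `h v` and from `h v` to `h² v` shared an edge at `h v`, then either `h` would invert
that edge or the neighbour of `v` on the way to `h v` would be moved by less than `τ(h)`. Hence
`d(v, h² v) = 2 τ(h)`, and since local geodesics in trees are geodesic, `d(v, hⁿ v) = n τ(h)` for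
all `n`. Displacements of a fixed element at two vertices differ by at most twice the distance of
the vertices, so comparing the powers of `hⁿ` on the axes of `h` and of `hⁿ` gives
`τ(hⁿ) = n τ(h)`.

If a vertex lies both in `S = Fix(a)` and in `Fix(x a x⁻¹) = x S`, then `S` contains some `w` and
`x w`, hence has diameter at least `τ(x)`.
-/

open SimpleGraph Pointwise

section TreeDefs

variable {G : Type*} [Group G]

/-- The action of `G` on the vertices preserves adjacency. -/
def ActsByAut (G : Type*) [Group G] {V : Type*} [MulAction G V] (T : SimpleGraph V) : Prop :=
  ∀ (g : G) (v w : V), T.Adj v w → T.Adj (g • v) (g • w)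

/-- The action has no edge inversions: no element swaps the endpoints of an edge. -/
def NoEdgeInversion (G : Type*) [Group G] {V : Type*} [MulAction G V] (T : SimpleGraph V) : Prop :=
  ∀ (g : G) (v w : V), T.Adj v w → ¬(g • v = w ∧ g • w = v)

/-- The set of vertices fixed by `g`. -/
def Fixed (V : Type*) [MulAction G V] (g : G) : Set V := {v | g • v = v}

/-- `g` is elliptic: it fixes some vertex. -/
def IsElliptic (V : Type*) [MulAction G V] (g : G) : Prop := ∃ v : V, g • v = v

/-- `g` is hyperbolic: it fixes no vertex. -/
def IsHyperbolic (V : Type*) [MulAction G V] (g : G) : Prop := ¬ ∃ v : V, g • v = v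

/-- Translation length of `g`: the infimum of `d(v, g • v)` over all vertices `v`. -/
noncomputable def transLen {V : Type*} [MulAction G V] (T : SimpleGraph V) (g : G) : ℕ :=
  ⨅ v : V, T.dist v (g • v)

/-- The axis of a (hyperbolic) element: the vertices moved exactly the translation length. -/
noncomputable def Axis {V : Type*} [MulAction G V] (T : SimpleGraph V) (g : G) : Set V :=
  {v | T.dist v (g • v) = transLen T g}

/-- Diameter (in `ℕ∞`) of a set of vertices: the sup of pairwise simplicial distances. -/
noncomputable def setDiam {V : Type*} (T : SimpleGraph V) (S : Set V) : ℕ∞ :=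
  ⨆ v ∈ S, ⨆ w ∈ S, (T.dist v w : ℕ∞)

/-- Minimal simplicial distance between two sets of vertices. -/
noncomputable def setDist {V : Type*} (T : SimpleGraph V) (A B : Set V) : ℕ :=
  sInf {n : ℕ | ∃ v ∈ A, ∃ w ∈ B, T.dist v w = n}

/-- The action of `G` on `T` is `k`-acylindrical: the fixed-point set of every nontrivial
elliptic element has diameter at most `k`. -/
def AcylindricalAction {V : Type*} (T : SimpleGraph V) (G : Type*) [Group G] [MulAction G V]
    (k : ℕ) : Prop :=
  ∀ g : G, g ≠ 1 → IsElliptic V g → setDiam T (Fixed V g) ≤ (k : ℕ∞)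

/-- `a` and `b` generate a rank 2 free product in `G`: the canonical homomorphism
`⟨a⟩ ∗ ⟨b⟩ → G` from the free product of the cyclic subgroups generated by `a` and `b`
is injective. -/
def IsRank2FreeProduct {G : Type*} [Group G] (a b : G) : Prop :=
  Function.Injective
    (Monoid.Coprod.lift (Subgroup.zpowers a).subtype (Subgroup.zpowers b).subtype)

/-- `a` and `b` freely generate a rank 2 free subgroup of `G`: the homomorphism from the
free group on two generators sending the generators to `a` and `b` is injective. -/
def FreelyGeneratesFreeSubgroup {G : Type*} [Group G] (a b : G) : Prop :=
  Function.Injective ((FreeGroup.lift (fun i : Bool => if i then a else b)) : FreeGroup Bool →* G)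

/-- `a` and `b` freely generate a rank 2 free subsemigroup of `G`: the monoid homomorphism
from the free monoid on two generators sending the generators to `a` and `b` is injective. -/
def FreelyGeneratesFreeSubsemigroup {G : Type*} [Monoid G] (a b : G) : Prop :=
  Function.Injective ((FreeMonoid.lift (fun i : Bool => if i then a else b)) : FreeMonoid Bool →* G)

/-- A line in a simplicial tree: the image of an isometric embedding of `ℤ`. -/
def IsLine {V : Type*} (T : SimpleGraph V) (L : Set V) : Prop :=
  ∃ f : ℤ → V, (∀ m n : ℤ, T.dist (f m) (f n) = (m - n).natAbs) ∧ L = Set.range f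

end TreeDefs

section Graphs

variable {V : Type*} {T : SimpleGraph V} {u v w x : V}

theorem length_eq_dist_of_isPath (hT : T.IsAcyclic) {p : T.Walk u v} (hp : p.IsPath) :
    p.length = T.dist u v := by
  obtain ⟨q, hq, hlen⟩ := p.reachable.exists_path_of_dist
  have heq : p = q := congrArg Subtype.val ((hT.subsingleton_path u v).elim ⟨p, hp⟩ ⟨q, hq⟩)
  rw [heq, hlen]

theorem isPath_append_of_penultimate_ne_snd (hT : T.IsAcyclic) {p : T.Walk u v} {q : T.Walk v w}
    (hp : p.IsPath) (hq : q.IsPath) (hne : p.penultimate ≠ q.snd) : (p.append q).IsPath := by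
  rw [hT.isPath_iff_isChain, Walk.edges_append]
  refine ((hT.isPath_iff_isChain p).1 hp).append ((hT.isPath_iff_isChain q).1 hq) ?_
  rintro e hep _ heq rfl
  have hlast : e = s(p.penultimate, v) := by
    rw [← List.getLast_of_mem_getLast? hep, Walk.getLast_edges_eq_mk_penultimate_end]
  have hhead : e = s(v, q.snd) := by
    rw [← List.head_of_mem_head? heq, Walk.head_edges_eq_mk_start_snd]
  rw [hlast, Sym2.eq_swap, Sym2.congr_right] at hhead
  exact hne hhead

theorem dist_eq_add_add_of_overlapping_geodesics (hT : T.IsTree) (hvw : v ≠ w)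
    (huw : T.dist u w = T.dist u v + T.dist v w) (hvx : T.dist v x = T.dist v w + T.dist w x) :
    T.dist u x = T.dist u v + T.dist v w + T.dist w x := by
  obtain ⟨p, hp⟩ := hT.connected.exists_walk_length_eq_dist u v
  obtain ⟨q, hq⟩ := hT.connected.exists_walk_length_eq_dist v w
  obtain ⟨r, hr⟩ := hT.connected.exists_walk_length_eq_dist w x
  have hpq : (p.append q).IsPath := Walk.isPath_of_length_eq_dist _ (by simp [hp, hq, huw])
  have hqr : (q.append r).IsPath := Walk.isPath_of_length_eq_dist _ (by simp [hq, hr, hvx])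
  have hq_edges : q.edges ≠ [] := fun h => hvw (Walk.edges_eq_nil.1 h).eq
  have hpqr : ((p.append q).append r).IsPath := by
    rw [hT.isAcyclic.isPath_iff_isChain] at hpq hqr ⊢
    simp only [Walk.edges_append] at hpq hqr ⊢
    exact hpq.append_overlap hqr hq_edges
  rw [← length_eq_dist_of_isPath hT.isAcyclic hpqr, Walk.length_append, Walk.length_append, hp, hq,
    hr]

theorem dist_snd_penultimate_add_two_le (p : T.Walk u v) (hp : 2 ≤ p.length) :
    T.dist p.snd p.penultimate + 2 ≤ p.length := by
  cases p with
  | nil => simp at hp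
  | cons hadj q =>
    have hq : ¬q.Nil := fun h => by simp [Walk.length_eq_zero_iff.2 h] at hp
    have hle := dist_le q.dropLast
    rw [Walk.length_dropLast] at hle
    rw [Walk.snd_cons, Walk.penultimate_cons_of_not_nil _ _ hq]
    simp only [Walk.length_cons] at hp ⊢
    omega

theorem dist_le_setDiam {S : Set V} (hv : v ∈ S) (hw : w ∈ S) : (T.dist v w : ℕ∞) ≤ setDiam T S :=
  le_iSup₂_of_le v hv (le_iSup₂_of_le w hw le_rfl)

end Graphs

section Actions

variable {G V : Type*} [Group G] [MulAction G V] {T : SimpleGraph V} {g h : G}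

theorem IsElliptic.zpow (hg : IsElliptic V g) (l : ℤ) : IsElliptic V (g ^ l) :=
  hg.imp fun _ hv => MulAction.mem_fixedBy_zpow hv l

theorem fixed_conj (a x : G) : Fixed V (x * a * x⁻¹) = x • Fixed V a :=
  (MulAction.smul_fixedBy V a x).symm

theorem transLen_le_dist (T : SimpleGraph V) (g : G) (v : V) : transLen T g ≤ T.dist v (g • v) :=
  ciInf_le' _ v

theorem axis_nonempty [Nonempty V] (T : SimpleGraph V) (g : G) : (Axis T g).Nonempty :=
  ciInf_mem fun v : V => T.dist v (g • v)

theorem IsHyperbolic.transLen_pos (hh : IsHyperbolic V h) (hT : T.Connected) :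
    0 < transLen T h := by
  have := hT.nonempty
  obtain ⟨v, hv⟩ := axis_nonempty T h
  rw [← show T.dist v (h • v) = transLen T h from hv]
  exact hT.pos_dist_of_ne fun hfix => hh ⟨v, hfix.symm⟩

theorem disjoint_smul_of_setDiam_lt_transLen {S : Set V} {x : G}
    (hS : setDiam T S < transLen T x) : Disjoint S (x • S) := by
  rw [Set.disjoint_left]
  rintro _ hxw ⟨w, hw, rfl⟩
  have htrans : (transLen T x : ℕ∞) ≤ T.dist w (x • w) := mod_cast transLen_le_dist T x w
  exact (htrans.trans (dist_le_setDiam hw hxw)).not_gt hS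

end Actions

section TranslationLength

variable {G V : Type*} [Group G] [MulAction G V] {T : SimpleGraph V} {h : G} {v : V}

/-- The graph endomorphism of `T` by which `g` acts. -/
def ActsByAut.hom (hAct : ActsByAut G T) (g : G) : T →g T where
  toFun v := g • v
  map_rel' := hAct g _ _

theorem ActsByAut.dist_smul (hAct : ActsByAut G T) (hT : T.Connected) (g : G) (u v : V) :
    T.dist (g • u) (g • v) = T.dist u v := by
  have hle (g : G) (u v : V) : T.dist (g • u) (g • v) ≤ T.dist u v := by
    obtain ⟨p, hp⟩ := hT.exists_walk_length_eq_dist u v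
    exact (dist_le (p.map (hAct.hom g))).trans_eq (by rw [Walk.length_map, hp])
  exact (hle g u v).antisymm (by simpa only [inv_smul_smul] using hle g⁻¹ (g • u) (g • v))

theorem ActsByAut.dist_smul_le_add_two_mul_dist (hAct : ActsByAut G T) (hT : T.Connected) (g : G)
    (u v : V) : T.dist u (g • u) ≤ T.dist v (g • v) + 2 * T.dist u v := by
  have huv := hT.dist_triangle (u := u) (v := v) (w := g • u)
  have hvu := hT.dist_triangle (u := v) (v := g • v) (w := g • u)
  have hsmul := hAct.dist_smul hT g v u
  rw [T.dist_comm (u := v) (v := u)] at hsmul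
  omega

theorem penultimate_ne_smul_snd (hNoInv : NoEdgeInversion G T) (hv : v ∈ Axis T h)
    {p : T.Walk v (h • v)} (hp : p.length = T.dist v (h • v)) (hnil : ¬p.Nil) :
    p.penultimate ≠ h • p.snd := by
  intro hback
  obtain hlen | hlen : p.length = 1 ∨ 2 ≤ p.length := by
    have hpos := Walk.not_nil_iff_lt_length.1 hnil
    omega
  · have hsnd : p.snd = h • v := by rw [Walk.snd, ← hlen, Walk.getVert_length]
    have hpen : p.penultimate = v := by simp [Walk.penultimate, hlen]
    rw [hpen, hsnd] at hback
    exact hNoInv h v (h • v) (Walk.adj_of_length_eq_one hlen) ⟨rfl, hback.symm⟩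
  · have hdist := dist_snd_penultimate_add_two_le p hlen
    have hmin := transLen_le_dist T h p.snd
    rw [← hback] at hmin
    have hτ : T.dist v (h • v) = transLen T h := hv
    omega

theorem dist_smul_smul_of_mem_axis (hT : T.IsTree) (hAct : ActsByAut G T)
    (hNoInv : NoEdgeInversion G T) (hv : v ∈ Axis T h) :
    T.dist v (h • h • v) = 2 * transLen T h := by
  have hτ : T.dist v (h • v) = transLen T h := hv
  obtain ⟨p, hp, hlen⟩ := hT.connected.exists_path_of_dist v (h • v)
  by_cases hnil : p.Nil
  · have hfix : h • v = v := hnil.eq.symm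
    rw [← hτ, hfix, hfix, SimpleGraph.dist_self]
  let q : T.Walk (h • v) (h • h • v) := p.map (hAct.hom h)
  have hq : q.IsPath := hp.map (MulAction.injective h)
  have hturn : p.penultimate ≠ q.snd := by
    rw [show q.snd = h • p.snd from Walk.getVert_map ..]
    exact penultimate_ne_smul_snd hNoInv hv hlen hnil
  have hpq := isPath_append_of_penultimate_ne_snd hT.isAcyclic hp hq hturn
  have hqlen : q.length = p.length := Walk.length_map ..
  rw [← length_eq_dist_of_isPath hT.isAcyclic hpq, Walk.length_append, hqlen, hlen, hτ, two_mul]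

theorem dist_pow_smul_of_mem_axis (hT : T.IsTree) (hAct : ActsByAut G T)
    (hNoInv : NoEdgeInversion G T) (hv : v ∈ Axis T h) (n : ℕ) :
    T.dist v (h ^ n • v) = n * transLen T h := by
  have hτ : T.dist v (h • v) = transLen T h := hv
  have hshift (w : V) : T.dist (h • v) (h • w) = T.dist v w := hAct.dist_smul hT.connected h v w
  by_cases hfix : h • v = v
  · have hpow : h ^ n • v = v := by simpa using MulAction.mem_fixedBy_zpow hfix n
    rw [hpow, ← hτ, hfix, SimpleGraph.dist_self, mul_zero]
  induction n using Nat.twoStepInduction with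
  | zero => simp
  | one => simpa using hτ
  | more n ihn ihn1 =>
    have htwo := dist_smul_smul_of_mem_axis hT hAct hNoInv hv
    have htail : T.dist (h • h • v) (h • h • h ^ n • v) = n * transLen T h := by
      rw [hAct.dist_smul hT.connected, hshift, ihn]
    rw [pow_succ', mul_smul] at ihn1
    rw [pow_succ', pow_succ', mul_smul, mul_smul,
      dist_eq_add_add_of_overlapping_geodesics hT (v := h • v) (w := h • h • v), hshift, htail, hτ]
    · ring
    · exact fun heq => hfix (MulAction.injective h heq).symm
    · rw [htwo, hshift, hτ, two_mul]
    · rw [hshift, hshift, ihn1, htail, hτ]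
      ring

theorem transLen_pow (hT : T.IsTree) (hAct : ActsByAut G T) (hNoInv : NoEdgeInversion G T)
    (h : G) (n : ℕ) : transLen T (h ^ n) = n * transLen T h := by
  have := hT.connected.nonempty
  obtain ⟨v, hv⟩ := axis_nonempty T h
  obtain ⟨w, hw⟩ := axis_nonempty T (h ^ n)
  apply le_antisymm
  · exact (transLen_le_dist T (h ^ n) v).trans_eq (dist_pow_smul_of_mem_axis hT hAct hNoInv hv n)
  have hgrowth (m : ℕ) :
      m * (n * transLen T h) ≤ m * transLen T (h ^ n) + 2 * T.dist v w := by
    calc m * (n * transLen T h) = T.dist v ((h ^ n) ^ m • v) := by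
          rw [← pow_mul, dist_pow_smul_of_mem_axis hT hAct hNoInv hv]
          ring
      _ ≤ T.dist w ((h ^ n) ^ m • w) + 2 * T.dist v w :=
          hAct.dist_smul_le_add_two_mul_dist hT.connected _ v w
      _ = m * transLen T (h ^ n) + 2 * T.dist v w := by
          rw [dist_pow_smul_of_mem_axis hT hAct hNoInv hw]
  by_contra! hlt
  have hscaled := Nat.mul_le_mul_left (2 * T.dist v w + 1) (Nat.succ_le_of_lt hlt)
  have hbound := hgrowth (2 * T.dist v w + 1)
  rw [Nat.mul_succ] at hscaled
  omega

end TranslationLength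

theorem statement15_general {G V : Type*} [Group G] [MulAction G V] {T : SimpleGraph V}
    (hT : T.IsTree) (hAct : ActsByAut G T) (hNoInv : NoEdgeInversion G T) {a h : G} {p : ℕ}
    (hdiam : setDiam T (Fixed V a) < (p * transLen T h : ℕ)) :
    Fixed V a ∩ Fixed V (h ^ p * a * (h ^ p)⁻¹) = ∅ := by
  rw [← transLen_pow hT hAct hNoInv] at hdiam
  rw [fixed_conj, ← Set.disjoint_iff_inter_eq_empty]
  exact disjoint_smul_of_setDiam_lt_transLen hdiam

/-- If `G` acts `k`-acylindrically without edge inversions on a simplicial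
tree, `g` is elliptic, `h` is hyperbolic, `ℓ ≠ 0` with `g^ℓ ≠ 1`, and `p ≥ k + 1`, then
`Fix(g^ℓ) ∩ Fix(h^p * g^ℓ * h^(-p)) = ∅`. -/
theorem statement15 {G V : Type*} [Group G] [MulAction G V] (T : SimpleGraph V)
    (hT : T.IsTree) (hAct : ActsByAut G T) (hNoInv : NoEdgeInversion G T)
    (k : ℕ) (hAcyl : AcylindricalAction T G k)
    (g h : G) (hg : IsElliptic V g) (hh : IsHyperbolic V h)
    (l : ℤ) (hl : l ≠ 0) (hgl : g ^ l ≠ 1)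
    (p : ℕ) (hp : k + 1 ≤ p) :
    Fixed V (g ^ l) ∩ Fixed V (h ^ p * g ^ l * (h ^ p)⁻¹) = (∅ : Set V) := by
  have hpτ : k < p * transLen T h :=
    hp.trans (Nat.le_mul_of_pos_right p (hh.transLen_pos hT.connected))
  exact statement15_general hT hAct hNoInv ((hAcyl _ hgl (hg.zpow l)).trans_lt (mod_cast hpτ))
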